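/- arXiv:2210.12286 — 2 statements merged into one kernel-verified Lean document; each statement's English description precedes it below -/
import Mathlib

section
/- Let f : ℝ → ℝ be integrable and let W be a family of open intervals of ℝ. For every ε > 0 there exists a finite subfamily T = {T₁, …, T_N} ⊆ W such that ∫ over (⋃W) \ (T₁ ∪ … ∪ T_N) of |f(t)| dt < ε, every point of ℝ belongs to at most two of the intervals T₁, …, T_N, and each interval Tₖ intersects at most two other intervals of T. -/
open MeasureTheory

theorem aux_fin (f : ℝ → ℝ) (hf : Integrable f)
    (W : Set (Set ℝ)) (hW : ∀ I ∈ W, IsOpen I) (ε : ℝ) (hε : 0 < ε) :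
    ∃ T : Set (Set ℝ), T ⊆ W ∧ T.Finite ∧ (∫ t in (⋃₀ W) \ (⋃₀ T), |f t|) < ε := by
  obtain ⟨S, hS, hSW, hU⟩ := TopologicalSpace.isOpen_sUnion_countable W hW
  rcases S.eq_empty_or_nonempty with rfl | hne
  · refine ⟨∅, by simp, by simp, ?_⟩
    rw [← hU]; simpa using hε
  obtain ⟨u, rfl⟩ := hS.exists_eq_range hne
  have hm : ∀ n : ℕ, MeasurableSet ((⋃₀ W) \ (⋃₀ (u '' Set.Iio n))) := by
    intro n
    refine (isOpen_sUnion hW).measurableSet.diff (isOpen_sUnion ?_).measurableSet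
    rintro _ ⟨i, -, rfl⟩
    exact hW _ (hSW ⟨i, rfl⟩)
  have ha : Antitone (fun n : ℕ => (⋃₀ W) \ (⋃₀ (u '' Set.Iio n))) := by
    intro m n hmn
    exact Set.diff_subset_diff_right (Set.sUnion_subset_sUnion
      (Set.image_mono (Set.Iio_subset_Iio hmn)))
  have ht := tendsto_setIntegral_of_antitone (μ := volume) (f := fun t => |f t|) hm ha
    ⟨0, hf.abs.integrableOn⟩
  have he : (⋂ n : ℕ, (⋃₀ W) \ (⋃₀ (u '' Set.Iio n))) = ∅ := by
    rw [Set.eq_empty_iff_forall_notMem]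
    intro x hx
    rw [Set.mem_iInter] at hx
    have h0 := (hx 0).1
    rw [← hU] at h0
    obtain ⟨_, ⟨i, rfl⟩, hi⟩ := h0
    exact (hx (i+1)).2 ⟨u i, ⟨i, by simp, rfl⟩, hi⟩
  rw [he] at ht
  simp only [Measure.restrict_empty, integral_zero_measure] at ht
  obtain ⟨n, hn⟩ := (ht.eventually (gt_mem_nhds hε)).exists
  refine ⟨u '' Set.Iio n, ?_, (Set.finite_Iio n).image u, hn⟩
  rintro _ ⟨i, -, rfl⟩
  exact hSW ⟨i, rfl⟩

theorem aux_min (F : Set (Set ℝ)) (hF : F.Finite) :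
    ∃ T ⊆ F, ⋃₀ T = ⋃₀ F ∧ ∀ I ∈ T, ∀ J ∈ T, ∀ K ∈ T, J ≠ I → K ≠ I → ¬ I ⊆ J ∪ K := by
  have hfin : {G : Set (Set ℝ) | G ⊆ F ∧ ⋃₀ G = ⋃₀ F}.Finite :=
    hF.finite_subsets.subset (fun G h => h.1)
  obtain ⟨T, hT⟩ := hfin.exists_minimal ⟨F, subset_rfl, rfl⟩
  refine ⟨T, hT.prop.1, hT.prop.2, ?_⟩
  intro I hI J hJ K hK hJI hKI hsub
  have h1 : T \ {I} ∈ {G : Set (Set ℝ) | G ⊆ F ∧ ⋃₀ G = ⋃₀ F} := by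
    refine ⟨Set.diff_subset.trans hT.prop.1, ?_⟩
    rw [← hT.prop.2]
    refine (Set.sUnion_subset_sUnion Set.diff_subset).antisymm ?_
    rintro x ⟨L, hL, hx⟩
    by_cases hLI : L = I
    · subst hLI
      rcases hsub hx with h | h
      · exact ⟨J, ⟨hJ, hJI⟩, h⟩
      · exact ⟨K, ⟨hK, hKI⟩, h⟩
    · exact ⟨L, ⟨hL, hLI⟩, hx⟩
  exact (hT.le_of_le h1 Set.diff_subset hI).2 rfl

theorem aux_pt {a b c d e g x : ℝ} (h1 : a < x ∧ x < b) (h2 : c < x ∧ x < d) (h3 : e < x ∧ x < g)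
    (n1 : ¬ Set.Ioo a b ⊆ Set.Ioo c d ∪ Set.Ioo e g)
    (n2 : ¬ Set.Ioo c d ⊆ Set.Ioo a b ∪ Set.Ioo e g)
    (n3 : ¬ Set.Ioo e g ⊆ Set.Ioo a b ∪ Set.Ioo c d) : False := by
  simp only [Set.not_subset, Set.mem_union, Set.mem_Ioo, not_or, not_and, not_lt] at n1 n2 n3
  obtain ⟨y, hy, hy1, hy2⟩ := n1
  obtain ⟨z, hz, hz1, hz2⟩ := n2
  obtain ⟨w, hw, hw1, hw2⟩ := n3
  grind

theorem aux_left {a b c d e g : ℝ} (h1 : c < a) (h2 : a < d) (h3 : d ≤ b)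
    (h4 : e < a) (h5 : a < g) (h6 : g ≤ b)
    (n1 : ¬ Set.Ioo c d ⊆ Set.Ioo e g ∪ Set.Ioo a b)
    (n2 : ¬ Set.Ioo e g ⊆ Set.Ioo c d ∪ Set.Ioo a b) : False := by
  simp only [Set.not_subset, Set.mem_union, Set.mem_Ioo, not_or, not_and, not_lt] at n1 n2
  obtain ⟨y, hy, hy1, hy2⟩ := n1
  obtain ⟨z, hz, hz1, hz2⟩ := n2
  grind

theorem aux_right {a b c d e g : ℝ} (h1 : a ≤ c) (h2 : c < b) (h3 : b < d)
    (h4 : a ≤ e) (h5 : e < b) (h6 : b < g)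
    (n1 : ¬ Set.Ioo c d ⊆ Set.Ioo e g ∪ Set.Ioo a b)
    (n2 : ¬ Set.Ioo e g ⊆ Set.Ioo c d ∪ Set.Ioo a b) : False := by
  simp only [Set.not_subset, Set.mem_union, Set.mem_Ioo, not_or, not_and, not_lt] at n1 n2
  obtain ⟨y, hy, hy1, hy2⟩ := n1
  obtain ⟨z, hz, hz1, hz2⟩ := n2
  grind

theorem aux_side {a b c d : ℝ} (h : (Set.Ioo c d ∩ Set.Ioo a b).Nonempty)
    (n1 : ¬ Set.Ioo c d ⊆ Set.Ioo a b) (n2 : ¬ Set.Ioo a b ⊆ Set.Ioo c d) :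
    (c < a ∧ a < d ∧ d ≤ b) ∨ (a ≤ c ∧ c < b ∧ b < d) := by
  obtain ⟨x, ⟨hx1, hx2⟩, hx3, hx4⟩ := h
  simp only [Set.not_subset, Set.mem_Ioo, not_and, not_lt] at n1 n2
  obtain ⟨y, hy, hy1⟩ := n1
  obtain ⟨z, hz, hz1⟩ := n2
  grind

/-- From any family `W` of open intervals one can select a finite subfamily `T`
capturing all but `ε` of the integral of `|f|` over `⋃W`, such that every point
lies in at most two intervals of `T` and each interval of `T` meets at most two
other intervals of `T`. -/
theorem stmt_15 (f : ℝ → ℝ) (hf : Integrable f)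
    (W : Set (Set ℝ)) (hW : ∀ I ∈ W, ∃ a b : ℝ, I = Set.Ioo a b) :
    ∀ ε : ℝ, 0 < ε →
      ∃ T : Set (Set ℝ), T ⊆ W ∧ T.Finite ∧
        (∫ t in (⋃₀ W) \ (⋃₀ T), |f t|) < ε ∧
        (∀ x : ℝ, ({I ∈ T | x ∈ I}).ncard ≤ 2) ∧
        (∀ I ∈ T, ({J ∈ T | J ≠ I ∧ (J ∩ I).Nonempty}).ncard ≤ 2) := by
  intro ε hε
  obtain ⟨F, hFW, hF, hFε⟩ := aux_fin f hf W
    (fun I hI => by obtain ⟨a, b, rfl⟩ := hW I hI; exact isOpen_Ioo) ε hε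
  obtain ⟨T, hTF, hTU, hT⟩ := aux_min F hF
  have hTfin := hF.subset hTF
  have hTW := hTF.trans hFW
  refine ⟨T, hTW, hTfin, by rwa [hTU], ?_, ?_⟩
  · intro x
    by_contra hcon
    rw [not_le, Set.two_lt_ncard (hTfin.subset (Set.sep_subset _ _))] at hcon
    obtain ⟨I, ⟨hI, hxI⟩, J, ⟨hJ, hxJ⟩, K, ⟨hK, hxK⟩, hIJ, hIK, hJK⟩ := hcon
    have n1 := hT I hI J hJ K hK hIJ.symm hIK.symm
    have n2 := hT J hJ I hI K hK hIJ hJK.symm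
    have n3 := hT K hK I hI J hJ hIK hJK
    obtain ⟨a, b, rfl⟩ := hW I (hTW hI)
    obtain ⟨c, d, rfl⟩ := hW J (hTW hJ)
    obtain ⟨e, g, rfl⟩ := hW K (hTW hK)
    exact aux_pt hxI hxJ hxK n1 n2 n3
  · intro I hI
    by_contra hcon
    rw [not_le, Set.two_lt_ncard (hTfin.subset (Set.sep_subset _ _))] at hcon
    obtain ⟨J, ⟨hJ, hJI, hxJ⟩, K, ⟨hK, hKI, hxK⟩, L, ⟨hL, hLI, hxL⟩, hJK, hJL, hKL⟩ := hcon
    have sub : ∀ A ∈ T, ∀ B ∈ T, A ≠ B → ¬ A ⊆ B := fun A hA B hB hAB h =>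
      hT A hA B hB B hB hAB.symm hAB.symm (by simpa using h)
    have j1 := sub J hJ I hI hJI
    have j2 := sub I hI J hJ hJI.symm
    have k1 := sub K hK I hI hKI
    have k2 := sub I hI K hK hKI.symm
    have l1 := sub L hL I hI hLI
    have l2 := sub I hI L hL hLI.symm
    have m1 := hT J hJ K hK I hI hJK.symm hJI.symm
    have m2 := hT K hK J hJ I hI hJK hKI.symm
    have m3 := hT J hJ L hL I hI hJL.symm hJI.symm
    have m4 := hT L hL J hJ I hI hJL hLI.symm
    have m5 := hT K hK L hL I hI hKL.symm hKI.symm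
    have m6 := hT L hL K hK I hI hKL hLI.symm
    clear sub
    obtain ⟨a, b, rfl⟩ := hW I (hTW hI)
    obtain ⟨c, d, rfl⟩ := hW J (hTW hJ)
    obtain ⟨e, g, rfl⟩ := hW K (hTW hK)
    obtain ⟨p, q, rfl⟩ := hW L (hTW hL)
    rcases aux_side hxJ j1 j2 with ⟨x1, x2, x3⟩ | ⟨x1, x2, x3⟩ <;>
    rcases aux_side hxK k1 k2 with ⟨y1, y2, y3⟩ | ⟨y1, y2, y3⟩ <;>
    rcases aux_side hxL l1 l2 with ⟨z1, z2, z3⟩ | ⟨z1, z2, z3⟩ <;>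
    first
    | exact aux_left x1 x2 x3 y1 y2 y3 m1 m2
    | exact aux_left x1 x2 x3 z1 z2 z3 m3 m4
    | exact aux_left y1 y2 y3 z1 z2 z3 m5 m6
    | exact aux_right x1 x2 x3 y1 y2 y3 m1 m2
    | exact aux_right x1 x2 x3 z1 z2 z3 m3 m4
    | exact aux_right y1 y2 y3 z1 z2 z3 m5 m6
end

section
/- If f is moreover integrable on (0,∞) (f ∈ L¹), then for every s ∈ ℝ the limit lim_{t→∞} a(t,s) exists in ℂ. -/
open MeasureTheory Complex Filter

lemma ac_const (c : ℂ) (a b : ℝ) : AbsolutelyContinuousOnInterval (fun _ : ℝ => c) a b :=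
  ContDiffOn.absolutelyContinuousOnInterval contDiffOn_const

lemma ac_integral {k : ℝ → ℂ} {T : ℝ} (hk : IntervalIntegrable k volume 0 T) :
    AbsolutelyContinuousOnInterval (fun x : ℝ => ∫ u in (0:ℝ)..x, k u) 0 T := by
  have hre : IntervalIntegrable (fun u => (k u).re) volume 0 T := ⟨hk.1.re, hk.2.re⟩
  have him : IntervalIntegrable (fun u => (k u).im) volume 0 T := ⟨hk.1.im, hk.2.im⟩
  have h1 := (hre.absolutelyContinuousOnInterval_intervalIntegral (c := 0) (by simp)).fun_smul
    (ac_const 1 0 T)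
  have h2 := (him.absolutelyContinuousOnInterval_intervalIntegral (c := 0) (by simp)).fun_smul
    (ac_const I 0 T)
  have h3 := h1.fun_add h2
  rw [absolutelyContinuousOnInterval_iff] at h3 ⊢
  have key : ∀ x ∈ Set.uIcc 0 T, (∫ u in (0:ℝ)..x, k u) =
      (∫ u in (0:ℝ)..x, (k u).re) • (1:ℂ) + (∫ u in (0:ℝ)..x, (k u).im) • I := by
    intro x hx
    have hsub : Set.uIcc 0 x ⊆ Set.uIcc 0 T := Set.uIcc_subset_uIcc (by simp) hx
    have a1 : IntervalIntegrable (fun u => (((k u).re : ℝ) : ℂ)) volume 0 x :=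
      ⟨(hre.mono_set hsub).1.ofReal, (hre.mono_set hsub).2.ofReal⟩
    have a2 : IntervalIntegrable (fun u => (((k u).im : ℝ) : ℂ)) volume 0 x :=
      ⟨(him.mono_set hsub).1.ofReal, (him.mono_set hsub).2.ofReal⟩
    rw [Complex.real_smul, Complex.real_smul, mul_one, ← intervalIntegral.integral_ofReal,
      ← intervalIntegral.integral_ofReal, ← intervalIntegral.integral_mul_const,
      ← intervalIntegral.integral_add a1 (a2.mul_const I)]
    congr 1
    funext u
    exact (Complex.re_add_im _).symm
  intro ε hε
  obtain ⟨δ, hδ, h⟩ := h3 ε hε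
  refine ⟨δ, hδ, fun E hE hl => ?_⟩
  have := h E hE hl
  refine lt_of_eq_of_lt (Finset.sum_congr rfl fun i hi => ?_) this
  have := hE.1 i hi
  rw [key _ this.1, key _ this.2]

lemma var_const {k : ℝ → ℂ} {T : ℝ} (hk : IntervalIntegrable k volume 0 T) (x0 c : ℂ) :
    exp (c * T) * (x0 + ∫ u in (0:ℝ)..T, k u) =
      x0 + ∫ u in (0:ℝ)..T, exp (c * u) * (c * (x0 + ∫ v in (0:ℝ)..u, k v) + k u) := by
  have hX := (ac_const x0 0 T).fun_add (ac_integral hk)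
  have hw : ∀ x : ℝ, HasDerivAt (fun t : ℝ => exp (c * t)) (exp (c * x) * c) x := by
    intro x
    have := ((hasDerivAt_id x).ofReal_comp.const_mul c).cexp
    simpa using this
  have hwc : ContDiff ℝ 1 (fun t : ℝ => exp (c * t)) := by
    have : ContDiff ℝ 1 (fun t : ℝ => (t : ℂ)) := Complex.ofRealCLM.contDiff
    fun_prop
  have hint : IntervalIntegrable
      (fun u : ℝ => exp (c * u) * (c * (x0 + ∫ v in (0:ℝ)..u, k v) + k u)) volume 0 T := by
    refine IntervalIntegrable.continuousOn_mul ?_ hwc.continuous.continuousOn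
    exact (hX.continuousOn.intervalIntegrable.const_mul c).add hk
  have hF := ((hwc.contDiffOn (s := Set.uIcc 0 T)).absolutelyContinuousOnInterval.fun_smul hX).fun_sub
    (ac_integral hint)
  obtain ⟨C, hC⟩ := hF.const_of_ae_hasDerivAt_zero (by
    filter_upwards [hk.ae_hasDerivAt_integral, hint.ae_hasDerivAt_integral] with x h1 h2 hx
    have := ((hw x).mul ((h1 hx 0 (by simp)).const_add x0)).sub (h2 hx 0 (by simp))
    convert! this using 1
    ring)
  have e0 := hC 0 (by simp)
  have e1 := hC T (by simp)
  rw [← e0] at e1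
  simp at e1
  linear_combination e1

lemma conv_aux {p q g1 g2 : ℝ → ℂ} (p0 q0 : ℂ) (hp : Continuous p) (hq : Continuous q)
    (h1 : IntegrableOn g1 (Set.Ioi 0)) (h2 : IntegrableOn g2 (Set.Ioi 0))
    (ep : ∀ t : ℝ, 0 ≤ t → p t = p0 + ∫ u in (0:ℝ)..t, g1 u * q u)
    (eq : ∀ t : ℝ, 0 ≤ t → q t = q0 + ∫ u in (0:ℝ)..t, g2 u * p u) :
    ∃ L, Tendsto p atTop (nhds L) := by
  have hii : ∀ {g r : ℝ → ℂ}, IntegrableOn g (Set.Ioi 0) → Continuous r → ∀ a b : ℝ, 0 ≤ a → a ≤ b →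
      IntervalIntegrable (fun u => g u * r u) volume a b := by
    intro g r hg hr a b ha hab
    refine IntervalIntegrable.mul_continuousOn ?_ hr.continuousOn
    rw [intervalIntegrable_iff_integrableOn_Ioc_of_le hab]
    exact hg.mono_set fun x hx => lt_of_le_of_lt ha hx.1
  have hstep : ∀ {g r s : ℝ → ℂ} {s0 : ℂ}, IntegrableOn g (Set.Ioi 0) → Continuous r →
      (∀ t : ℝ, 0 ≤ t → s t = s0 + ∫ u in (0:ℝ)..t, g u * r u) → ∀ a b : ℝ, 0 ≤ a → a ≤ b →
      s b = s a + ∫ u in a..b, g u * r u := by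
    intro g r s s0 hg hr hs a b ha hab
    rw [hs b (ha.trans hab), hs a ha, add_assoc, intervalIntegral.integral_add_adjacent_intervals
      (hii hg hr 0 a le_rfl ha) (hii hg hr a b ha hab)]
  have hG : IntegrableOn (fun u => ‖g1 u‖ + ‖g2 u‖) (Set.Ioi 0) := h1.norm.add h2.norm
  have hev : ∀ᶠ T : ℝ in atTop, ∫ u in Set.Ioi T, (‖g1 u‖ + ‖g2 u‖) < 1/2 :=
    (tendsto_integral_Ioi_zero tendsto_id).eventually (gt_mem_nhds (by norm_num))
  obtain ⟨T, hT, hT0⟩ := (hev.and (eventually_ge_atTop 0)).exists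
  have hGT := hG.mono_set (Set.Ioi_subset_Ioi hT0)
  have hbd : ∀ t, T ≤ t → ‖p t‖ + ‖q t‖ ≤ 2 * (‖p T‖ + ‖q T‖) := by
    intro t ht
    obtain ⟨τ, hτ, hmax⟩ := isCompact_Icc.exists_isMaxOn (Set.nonempty_Icc.2 ht)
      (f := fun t => ‖p t‖ + ‖q t‖) (by fun_prop)
    set N := ‖p τ‖ + ‖q τ‖ with hN
    have hN0 : 0 ≤ N := by positivity
    have hle : ∀ u ∈ Set.Icc T t, ‖p u‖ + ‖q u‖ ≤ N := fun u hu => hmax hu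
    have bnd : ∀ {g r : ℝ → ℂ}, IntegrableOn g (Set.Ioi 0) → Continuous r →
      (∀ u ∈ Set.Icc T t, ‖r u‖ ≤ N) →
      ‖∫ u in T..τ, g u * r u‖ ≤ N * ∫ u in Set.Ioi T, ‖g u‖ := by
      intro g r hg hr hb
      have hg' : IntegrableOn (fun u => ‖g u‖) (Set.Ioi T) :=
        (hg.mono_set (Set.Ioi_subset_Ioi hT0)).norm
      calc _ ≤ ∫ u in T..τ, N * ‖g u‖ := by
            refine intervalIntegral.norm_integral_le_of_norm_le hτ.1 ?_ ?_
            · refine Eventually.of_forall fun u hu => ?_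
              rw [norm_mul, mul_comm]
              gcongr
              exact hb u ⟨hu.1.le, hu.2.trans hτ.2⟩
            · rw [intervalIntegrable_iff_integrableOn_Ioc_of_le hτ.1]
              exact (hg'.mono_set Set.Ioc_subset_Ioi_self).const_mul N
        _ = N * ∫ u in Set.Ioc T τ, ‖g u‖ := by
            rw [intervalIntegral.integral_const_mul, intervalIntegral.integral_of_le hτ.1]
        _ ≤ _ := by
            refine mul_le_mul_of_nonneg_left ?_ hN0
            refine setIntegral_mono_set hg' (Eventually.of_forall fun _ => norm_nonneg _)
              Set.Ioc_subset_Ioi_self.eventuallyLE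
    have b1 := bnd h1 hq (fun u hu => by linarith [hle u hu, norm_nonneg (p u)])
    have b2 := bnd h2 hp (fun u hu => by linarith [hle u hu, norm_nonneg (q u)])
    have c1 : ‖p τ‖ ≤ ‖p T‖ + ‖∫ u in T..τ, g1 u * q u‖ := by
      rw [hstep h1 hq ep T τ hT0 hτ.1]; exact norm_add_le _ _
    have c2 : ‖q τ‖ ≤ ‖q T‖ + ‖∫ u in T..τ, g2 u * p u‖ := by
      rw [hstep h2 hp eq T τ hT0 hτ.1]; exact norm_add_le _ _
    rw [integral_add (h1.mono_set (Set.Ioi_subset_Ioi hT0)).norm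
      (h2.mono_set (Set.Ioi_subset_Ioi hT0)).norm] at hT
    have := hle t ⟨ht, le_rfl⟩
    nlinarith
  have hI : IntegrableOn (fun u => g1 u * q u) (Set.Ioi T) := by
    refine Integrable.mul_bdd (c := 2 * (‖p T‖ + ‖q T‖)) (h1.mono_set (Set.Ioi_subset_Ioi hT0))
      hq.aestronglyMeasurable ?_
    refine (ae_restrict_mem measurableSet_Ioi).mono fun u hu => ?_
    linarith [hbd u (le_of_lt hu), norm_nonneg (p u)]
  refine ⟨p T + ∫ u in Set.Ioi T, g1 u * q u, ?_⟩
  refine Tendsto.congr' ?_ ((intervalIntegral_tendsto_integral_Ioi T hI tendsto_id).const_add (p T))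
  filter_upwards [eventually_ge_atTop T] with t ht
  exact (hstep h1 hq ep T t hT0 ht).symm

lemma column {f : ℝ → ℝ} (hf : IntegrableOn f (Set.Ioi (0:ℝ))) (s : ℝ) {x y : ℝ → ℂ} (x0 y0 : ℂ)
    (hx : Continuous x) (hy : Continuous y)
    (ex : ∀ t : ℝ, 0 ≤ t → x t = x0 + ∫ u in (0:ℝ)..t, (-(s * y u) + f u * x u))
    (ey : ∀ t : ℝ, 0 ≤ t → y t = y0 + ∫ u in (0:ℝ)..t, (s * x u - f u * y u)) :
    ∃ L, Tendsto (fun t : ℝ => exp (I * s * t) * (x t - I * y t)) atTop (nhds L) := by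
  have hfi : ∀ t : ℝ, 0 ≤ t → IntervalIntegrable (fun u => (f u : ℂ)) volume 0 t := by
    intro t ht
    rw [intervalIntegrable_iff_integrableOn_Ioc_of_le ht]
    exact (hf.mono_set Set.Ioc_subset_Ioi_self).ofReal
  have i1 : ∀ t : ℝ, 0 ≤ t →
      IntervalIntegrable (fun u => (-(s * y u) + f u * x u)) volume 0 t := fun t ht =>
    (Continuous.intervalIntegrable (by fun_prop) _ _).add ((hfi t ht).mul_continuousOn hx.continuousOn)
  have i2 : ∀ t : ℝ, 0 ≤ t →
      IntervalIntegrable (fun u => (s * x u - f u * y u)) volume 0 t := fun t ht =>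
    (Continuous.intervalIntegrable (by fun_prop) _ _).sub ((hfi t ht).mul_continuousOn hy.continuousOn)
  have gen : ∀ j : ℂ, j * j = -1 → ∀ t : ℝ, 0 ≤ t →
      exp (j * s * t) * (x t - j * y t) = (x0 - j * y0) +
        ∫ u in (0:ℝ)..t, (f u * exp (2 * j * s * u)) * (exp (-j * s * u) * (x u + j * y u)) := by
    intro j hj t ht
    have hE : ∀ t : ℝ, 0 ≤ t → x t - j * y t = (x0 - j * y0) + ∫ u in (0:ℝ)..t,
        ((-(s * y u) + f u * x u) - j * (s * x u - f u * y u)) := by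
      intro t ht
      rw [intervalIntegral.integral_sub (i1 t ht) ((i2 t ht).const_mul j),
        intervalIntegral.integral_const_mul, ex t ht, ey t ht]
      ring
    have := var_const ((i1 t ht).sub ((i2 t ht).const_mul j)) (x0 - j * y0) (j * s)
    rw [← hE t ht] at this
    rw [this]
    congr 1
    refine intervalIntegral.integral_congr fun u hu => ?_
    rw [Set.uIcc_of_le ht] at hu
    have e : exp (2 * j * s * u) * exp (-j * s * u) = exp (j * s * u) := by
      rw [← Complex.exp_add]; ring_nf
    have hu' := hE u hu.1
    beta_reduce
    rw [← hu']
    rw [show (f u * exp (2 * j * s * u)) * (exp (-j * s * u) * (x u + j * y u)) =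
      (exp (2 * j * s * u) * exp (-j * s * u)) * f u * (x u + j * y u) by ring, e]
    linear_combination (-exp (j * s * u) * s * y u) * hj
  have hgi : ∀ j : ℂ, j.re = 0 →
      IntegrableOn (fun u : ℝ => (f u : ℂ) * exp (2 * j * s * u)) (Set.Ioi 0) := by
    intro j hj
    refine Integrable.mul_bdd (c := 1) hf.ofReal
      (Continuous.aestronglyMeasurable (by fun_prop)) (Eventually.of_forall fun u => ?_)
    rw [Complex.norm_exp]
    simp [hj]
  refine conv_aux (q := fun u : ℝ => exp (-I * s * u) * (x u + I * y u)) (x0 - I * y0) (x0 + I * y0)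
    (by fun_prop) (by fun_prop) (hgi I (by simp)) (hgi (-I) (by simp)) (gen I (by simp)) ?_
  intro t ht
  have := gen (-I) (by simp) t ht
  simpa [sub_eq_add_neg] using this

/-- If `f ∈ L¹(0,∞)`, then `a(t,s)` converges as `t → ∞` for every `s ∈ ℝ`. -/
theorem stmt_19
    (f : ℝ → ℝ) (hf_meas : Measurable f)
    (hf_zero : ∀ x : ℝ, x < 0 → f x = 0)
    (hf_L1 : IntegrableOn f (Set.Ioi (0:ℝ)))
    (M : ℝ → ℂ → Matrix (Fin 2) (Fin 2) ℂ)
    (hM_cont : ∀ (z : ℂ) (i j : Fin 2), Continuous fun t : ℝ => M t z i j)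
    (hM_eq : ∀ (z : ℂ) (t : ℝ), 0 ≤ t → ∀ i j : Fin 2,
      M t z i j = (1 : Matrix (Fin 2) (Fin 2) ℂ) i j
        + ∫ u in (0:ℝ)..t,
            ((!![(0:ℂ), 1; -1, 0])⁻¹
              * (z • M u z - !![(0:ℂ), (f u : ℂ); (f u : ℂ), 0] * M u z)) i j)
    (E Et : ℝ → ℂ → ℂ)
    (hE : ∀ (t : ℝ) (z : ℂ), E t z = M t z 0 0 - Complex.I * M t z 1 0)
    (hEt : ∀ (t : ℝ) (z : ℂ), Et t z = M t z 0 1 - Complex.I * M t z 1 1)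
    (a : ℝ → ℝ → ℂ)
    (ha : ∀ t s : ℝ, a t s =
      Complex.exp (Complex.I * (s : ℂ) * (t : ℂ)) / 2 * (E t s + Complex.I * Et t s)) :
    ∀ s : ℝ, ∃ L : ℂ, Tendsto (fun t : ℝ => a t s) atTop (nhds L) := by
  intro s
  have hinv : (!![(0:ℂ), 1; -1, 0])⁻¹ = !![(0:ℂ), -1; 1, 0] := by
    apply Matrix.inv_eq_right_inv
    ext i j
    fin_cases i <;> fin_cases j <;> simp
  have col : ∀ j : Fin 2, ∃ L, Tendsto
      (fun t : ℝ => exp (I * s * t) * (M t s 0 j - I * M t s 1 j)) atTop (nhds L) := by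
    intro j
    refine column hf_L1 s ((1 : Matrix (Fin 2) (Fin 2) ℂ) 0 j) ((1 : Matrix (Fin 2) (Fin 2) ℂ) 1 j)
      (hM_cont s 0 j) (hM_cont s 1 j) ?_ ?_
    · intro t ht
      rw [hM_eq s t ht 0 j, hinv]
      congr 2
      funext u
      simp [Matrix.mul_apply, Fin.sum_univ_two, Matrix.vecMul, dotProduct]
      ring
    · intro t ht
      rw [hM_eq s t ht 1 j, hinv]
      congr 2
      funext u
      simp [Matrix.mul_apply, Fin.sum_univ_two, Matrix.vecMul, dotProduct]
  obtain ⟨L0, h0⟩ := col 0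
  obtain ⟨L1, h1⟩ := col 1
  refine ⟨(L0 + I * L1) / 2, ((h0.add (h1.const_mul I)).div_const 2).congr fun t => ?_⟩
  rw [ha, hE, hEt]
  ring
end
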